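/- Let each f_i : ℝ^d → ℝ (i = 1,…,n) be differentiable and μ-strongly convex with μ ≥ 0, satisfy the Hessian similarity condition with constant δ ≥ 0, let f = (1/n)∑ f_i, x_* ∈ argmin f, f^* = min f, and let γ > 0, p ∈ (0,1]. Fix x_k, w_k ∈ ℝ^d and define x_{k+1}(i) = prox_{γ f_i}(x_k + γ(∇f_i(w_k) − ∇f(w_k))) and x̄_{k+1} = (1/n)∑_{i=1}^n x_{k+1}(i). Suppose ξ ∈ [0,1], c > 0, ζ > 0 and r > 0 satisfy: c ≤ 1/((1+μγ)(1 − p(1−ξ))(1+ζ^{-1})), c p ξ ≥ δ²/((μ + 1/γ)²(1 − c(1−p))), and 1 − r = (1 − p(1−ξ))(1+ζ). Then, with E[Λ_{k+1} | x_k, w_k] = (1/n)∑_{i=1}^n [ ‖x_{k+1}(i) − x_*‖² + c(1−p)‖w_k − x_{k+1}(i)‖² ], one has E[Λ_{k+1} | x_k, w_k] ≤ max{ 1/(1+μγ), 1 − r }·(‖x_k − x_*‖² + c‖w_k − x_k‖²) − (2/(μ + 1/γ))·(f(x̄_{k+1}) − f^*). -/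

import Mathlib

/-!
Write `M = 1 + μγ`, `s = 1 - c(1-p)`, `h i = ∇f_i(w) - ∇F(w)`, `v i = X i - x̄`, so that
`∑ h i = 0` and `∑ v i = 0`.

The prox step gives `γ ∇f_i(X i) = x + γ h i - X i` (`gradient_of_prox`). Strong convexity of `f_i`
is used twice: from `X i` to `x_*`, which yields the contraction factor `1 / M`, and from `x̄` to
`X i`, which replaces `f_i (X i)` by `f_i x̄`. What is left over is the cross term
`2γ ⟪e i, v i⟫`, where `e i` is the difference between `w` and `x̄` of the deviation
`∇f_i - ∇F`. Young's inequality splits it into `γ² / (M s) ‖e i‖²` and `M s ‖v i‖²`, and the second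
piece is exactly what the available negative multiples of `‖v i‖²` absorb (`prox_step_bound`).

Averaging over `i` kills all terms linear in `v i` and `h i`, Hessian similarity bounds the average
of `‖e i‖²` by `δ² ‖w - x̄‖²`, and the parameter conditions turn the total coefficient of
`‖w - x̄‖²` into `c (1 - p(1-ξ))`. A last Young inequality
`‖w - x̄‖² ≤ (1+ζ) ‖w - x‖² + (1+ζ⁻¹) ‖x̄ - x‖²` finishes, the term in `‖x̄ - x‖²` being absorbed by
`- ‖x̄ - x‖² / M`.
-/

open RealInnerProductSpace Finset

section Helpers

variable {E : Type*} [NormedAddCommGroup E] [InnerProductSpace ℝ E]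

/-- First-order optimality condition of the proximal problem. -/
lemma gradient_of_prox [CompleteSpace E] {g : E → ℝ} (hg : Differentiable ℝ g) {γ : ℝ} {X y : E}
    (hX : ∀ z, γ * g X + (1 / 2) * ‖X - y‖ ^ 2 ≤ γ * g z + (1 / 2) * ‖z - y‖ ^ 2) :
    γ • gradient g X = y - X := by
  have h1 : HasFDerivAt (fun z => γ * g z) (γ • fderiv ℝ g X) X :=
    (hg X).hasFDerivAt.const_mul γ
  have h2 := ((((hasFDerivAt_id X).sub_const y).norm_sq).const_mul (1 / 2 : ℝ))
  have h3 := h1.add h2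
  have hmin : IsLocalMin ((fun z => γ * g z) + fun z => (1 / 2 : ℝ) * ‖id z - y‖ ^ 2) X :=
    Filter.Eventually.of_forall (fun z => by simpa using hX z)
  have h0 := hmin.hasFDerivAt_eq_zero h3
  refine ext_inner_right ℝ fun v => ?_
  have hv := congrArg (fun L => L v) h0
  have hgr : ⟪gradient g X, v⟫ = fderiv ℝ g X v := by
    simp [gradient]
  simp at hv
  rw [inner_smul_left, hgr]
  simp only [inner_sub_left] at hv ⊢
  simp
  linarith

/-- Gradient of a scaled finite sum; used with `a = 1 / n`. -/
lemma gradient_average [CompleteSpace E] {n : ℕ} (f : Fin n → E → ℝ)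
    (hf : ∀ i, Differentiable ℝ (f i)) (a : ℝ) (x : E) :
    gradient (fun x => a * ∑ i, f i x) x = a • ∑ i, gradient (f i) x := by
  have h : HasFDerivAt (fun x => a * ∑ i, f i x) (a • ∑ i, fderiv ℝ (f i) x) x :=
    (HasFDerivAt.fun_sum fun i _ => (hf i x).hasFDerivAt).const_mul a
  simp [gradient, h.fderiv, map_sum]

/-- Young's inequality for inner products. -/
lemma two_mul_inner_le_young (e v : E) {γ t : ℝ} (ht : 0 < t) :
    2 * γ * ⟪e, v⟫ ≤ γ ^ 2 / t * ‖e‖ ^ 2 + t * ‖v‖ ^ 2 := by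
  have h := sq_nonneg ‖γ • e - t • v‖
  rw [norm_sub_sq_real, inner_smul_left, inner_smul_right, norm_smul, norm_smul, mul_pow, mul_pow,
    Real.norm_eq_abs, Real.norm_eq_abs, sq_abs, sq_abs] at h
  simp only [conj_trivial] at h
  have h2 : γ ^ 2 / t * ‖e‖ ^ 2 + t * ‖v‖ ^ 2 - 2 * γ * ⟪e, v⟫
      = (γ ^ 2 * ‖e‖ ^ 2 - 2 * (γ * (t * ⟪e, v⟫)) + t ^ 2 * ‖v‖ ^ 2) / t := by
    field_simp
    ring
  have h3 := div_nonneg h ht.le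
  linarith

/-- The estimate for a single component. Here `φs`, `φb`, `φX` are the values of `f_i` at `x_*`,
`x̄`, `X`, and `gX`, `gb`, `gw` its gradients at `X`, `x̄`, `w`; `Gb`, `Gw` are the gradients of
the average at `x̄`, `w`, and `β` is `c (1 - p)`. The two inner products on the right vanish after averaging. -/
lemma prox_step_bound {γ μ β : ℝ} (hγ : 0 < γ) (hμ : 0 ≤ μ) (hβ : β < 1)
    (x w X xb xs gX gb gw Gb Gw : E) (φs φb φX : ℝ)
    (hprox : γ • gX = (x + γ • (gw - Gw)) - X)
    (hs : φs ≥ φX + ⟪gX, xs - X⟫ + μ / 2 * ‖X - xs‖ ^ 2)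
    (hb : φX ≥ φb + ⟪gb, X - xb⟫ + μ / 2 * ‖xb - X‖ ^ 2) :
    (1 + μ * γ) * (‖X - xs‖ ^ 2 + β * ‖w - X‖ ^ 2)
      ≤ ‖x - xs‖ ^ 2 - ‖xb - x‖ ^ 2 + 2 * γ * (φs - φb)
        + γ ^ 2 / ((1 + μ * γ) * (1 - β)) * ‖gw - gb - (Gw - Gb)‖ ^ 2
        + (1 + μ * γ) * β * ‖w - xb‖ ^ 2
        + ⟪X - xb, (-2 : ℝ) • (xb - x) - (2 * γ) • Gb - (2 * (1 + μ * γ) * β) • (w - xb)⟫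
        + ⟪gw - Gw, (2 * γ) • (xb - xs)⟫ := by
  have hM : 0 < 1 + μ * γ := by positivity
  have hy := two_mul_inner_le_young (gw - gb - (Gw - Gb)) (X - xb) (γ := γ)
    (mul_pos hM (sub_pos.2 hβ))
  have hs' := mul_le_mul_of_nonneg_left hs hγ.le
  have hb' := mul_le_mul_of_nonneg_left hb hγ.le
  have hin : γ * ⟪gX, xs - X⟫ = ⟪(x + γ • (gw - Gw)) - X, xs - X⟫ := by
    rw [← hprox, inner_smul_left]; simp
  obtain ⟨v, rfl⟩ : ∃ v, X = xb + v := ⟨X - xb, by abel⟩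
  obtain ⟨a, rfl⟩ : ∃ a, x = xb - a := ⟨xb - x, by abel⟩
  obtain ⟨b, rfl⟩ : ∃ b, xs = xb - b := ⟨xb - xs, by abel⟩
  obtain ⟨u, rfl⟩ : ∃ u, w = xb + u := ⟨w - xb, by abel⟩
  obtain ⟨h, rfl⟩ : ∃ h, gw = Gw + h := ⟨gw - Gw, by abel⟩
  have e1 : xb + v - (xb - b) = v + b := by abel
  have e2 : xb + u - (xb + v) = u - v := by abel
  have e3 : xb - a - (xb - b) = b - a := by abel
  have e4 : xb - (xb - a) = a := by abel
  have e5 : xb - (xb - b) = b := by abel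
  have e6 : xb + u - xb = u := by abel
  have e7 : xb + v - xb = v := by abel
  have e8 : Gw + h - Gw = h := by abel
  have e9 : xb - a + γ • h - (xb + v) = γ • h - a - v := by abel
  have e10 : xb - b - (xb + v) = -(v + b) := by abel
  have e11 : xb - (xb + v) = -v := by abel
  have e12 : Gw + h - gb - (Gw - Gb) = h - gb + Gb := by abel
  rw [e8, e9, e10] at hin
  rw [e10, e1] at hs'
  rw [e7, e11, norm_neg] at hb'
  rw [e12, e7] at hy
  rw [e1, e2, e3, e4, e5, e6, e7, e8, e12]
  have hyi : ⟪h - gb + Gb, v⟫ = ⟪h, v⟫ - ⟪gb, v⟫ + ⟪v, Gb⟫ := by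
    rw [inner_add_left, inner_sub_left, real_inner_comm v Gb]
  rw [hyi] at hy
  -- The Young remainder stays opaque while the other norms are expanded.
  generalize γ ^ 2 / ((1 + μ * γ) * (1 - β)) * ‖h - gb + Gb‖ ^ 2 = Q at hy ⊢
  simp only [inner_neg_right, inner_add_right, inner_sub_right, inner_sub_left, inner_smul_left,
    inner_smul_right, conj_trivial, norm_add_sq_real, norm_sub_sq_real,
    real_inner_self_eq_norm_sq] at hin hs' hb' ⊢
  rw [real_inner_comm v a, real_inner_comm b a, real_inner_comm v u] at *
  linarith

end Helpers

/-- Theorem 2 of the paper (amended one-step Lyapunov contraction, keeping the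
functional suboptimality term `f(x̄_{k+1}) − f^*`). -/
theorem lsvrp_one_step_lyapunov_contraction_amended
    (d n : ℕ) (hn : 0 < n)
    (f : Fin n → EuclideanSpace ℝ (Fin d) → ℝ) (μ δ γ p : ℝ)
    (hμ : 0 ≤ μ) (hδ : 0 ≤ δ) (hγ : 0 < γ) (hp0 : 0 < p) (hp1 : p ≤ 1)
    (hdiff : ∀ i, Differentiable ℝ (f i))
    (F : EuclideanSpace ℝ (Fin d) → ℝ)
    (hF : F = fun x => (1 / (n : ℝ)) * ∑ i, f i x)
    (hsc : ∀ i, ∀ x y : EuclideanSpace ℝ (Fin d),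
      f i y ≥ f i x + ⟪gradient (f i) x, y - x⟫ + μ / 2 * ‖x - y‖ ^ 2)
    (hsim : ∀ x y : EuclideanSpace ℝ (Fin d),
      (1 / (n : ℝ)) * ∑ i, ‖gradient (f i) x - gradient (f i) y
          - (gradient F x - gradient F y)‖ ^ 2
        ≤ δ ^ 2 * ‖x - y‖ ^ 2)
    (xstar : EuclideanSpace ℝ (Fin d)) (hxstar : ∀ x, F xstar ≤ F x)
    (Fstar : ℝ) (hFstar : Fstar = F xstar)
    (xk wk : EuclideanSpace ℝ (Fin d))
    (X : Fin n → EuclideanSpace ℝ (Fin d))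
    (hX : ∀ i, ∀ z : EuclideanSpace ℝ (Fin d),
      γ * f i (X i)
          + (1 / 2) * ‖X i - (xk + γ • (gradient (f i) wk - gradient F wk))‖ ^ 2
        ≤ γ * f i z
          + (1 / 2) * ‖z - (xk + γ • (gradient (f i) wk - gradient F wk))‖ ^ 2)
    (xbar : EuclideanSpace ℝ (Fin d))
    (hxbar : xbar = (1 / (n : ℝ)) • ∑ i, X i)
    (ξ c ζ r : ℝ) (hξ0 : 0 ≤ ξ) (hξ1 : ξ ≤ 1) (hc : 0 < c) (hζ : 0 < ζ) (hr : 0 < r)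
    (hcond1 : c ≤ 1 / ((1 + μ * γ) * (1 - p * (1 - ξ)) * (1 + ζ⁻¹)))
    (hcond2 : c * p * ξ ≥ δ ^ 2 / ((μ + 1 / γ) ^ 2 * (1 - c * (1 - p))))
    (hcond3 : 1 - r = (1 - p * (1 - ξ)) * (1 + ζ)) :
    (1 / (n : ℝ)) * ∑ i, (‖X i - xstar‖ ^ 2 + c * (1 - p) * ‖wk - X i‖ ^ 2)
      ≤ max (1 / (1 + μ * γ)) (1 - r)
            * (‖xk - xstar‖ ^ 2 + c * ‖wk - xk‖ ^ 2)
        - (2 / (μ + 1 / γ)) * (F xbar - Fstar) := by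
  have hn' : (0 : ℝ) < n := by exact_mod_cast hn
  have hM : 0 < 1 + μ * γ := by positivity
  have hζi : 0 < ζ⁻¹ := inv_pos.2 hζ
  -- If `1 - p(1-ξ) = 0`, the bound on `c` reads `c ≤ 1 / 0 = 0`, which contradicts `0 < c`.
  have hq : 0 < 1 - p * (1 - ξ) := by
    have h0 : 0 ≤ 1 - p * (1 - ξ) := by nlinarith
    rcases h0.lt_or_eq with h | h
    · exact h
    · rw [← h] at hcond1
      simp at hcond1
      linarith
  have hcq : c * ((1 + μ * γ) * (1 - p * (1 - ξ)) * (1 + ζ⁻¹)) ≤ 1 := by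
    rwa [le_div_iff₀ (by positivity)] at hcond1
  have hβ : c * (1 - p) < 1 := by
    have h1 : 1 - p ≤ 1 - p * (1 - ξ) := by nlinarith
    have h2 : c * (1 - p) ≤ c * (1 - p * (1 - ξ)) := by gcongr
    have h3 : 0 < c * (1 - p * (1 - ξ)) := by positivity
    have h4 : 1 < (1 + μ * γ) * (1 + ζ⁻¹) := by nlinarith [mul_nonneg hμ hγ.le]
    nlinarith
  have hs : 0 < 1 - c * (1 - p) := by linarith
  have hGw : gradient F wk = (1 / (n : ℝ)) • ∑ i, gradient (f i) wk := by
    rw [hF]; exact gradient_average f hdiff _ _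
  have hsumh : ∑ i, (gradient (f i) wk - gradient F wk) = 0 := by
    rw [sum_sub_distrib, sum_const, card_univ, Fintype.card_fin, hGw, ← Nat.cast_smul_eq_nsmul ℝ,
      smul_smul, mul_one_div_cancel hn'.ne', one_smul, sub_self]
  have hsumv : ∑ i, (X i - xbar) = 0 := by
    rw [sum_sub_distrib, sum_const, card_univ, Fintype.card_fin, hxbar, ← Nat.cast_smul_eq_nsmul ℝ,
      smul_smul, mul_one_div_cancel hn'.ne', one_smul, sub_self]
  have hstep := fun i => prox_step_bound hγ hμ hβ xk wk (X i) xbar xstar _ _ _ (gradient F xbar)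
    (gradient F wk) _ _ _ (gradient_of_prox (hdiff i) (hX i)) (hsc i (X i) xstar)
    (hsc i xbar (X i))
  have hsum := sum_le_sum fun i (_ : i ∈ univ) => hstep i
  simp only [sum_add_distrib, ← sum_inner, hsumh, hsumv, inner_zero_left, ← mul_sum, add_zero,
    sum_const, card_univ, Fintype.card_fin, sum_sub_distrib, nsmul_eq_mul] at hsum
  have havg := mul_le_mul_of_nonneg_left hsum (one_div_nonneg.2 hn'.le)
  have hFb : F xbar = (1 / (n : ℝ)) * ∑ i, f i xbar := by rw [hF]
  have hFs : Fstar = (1 / (n : ℝ)) * ∑ i, f i xstar := by rw [hFstar, hF]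
  have hsimw := hsim wk xbar
  rw [sum_add_distrib, ← mul_sum]
  set A := ∑ i, ‖X i - xstar‖ ^ 2
  set B := ∑ i, ‖wk - X i‖ ^ 2
  set S := ∑ i, ‖gradient (f i) wk - gradient (f i) xbar - (gradient F wk - gradient F xbar)‖ ^ 2
  set W := ‖wk - xbar‖ ^ 2 with hW
  have hW0 : 0 ≤ W := by positivity
  set L := 1 / (n : ℝ) * (A + c * (1 - p) * B) with hL
  have hmain : (1 + μ * γ) * L ≤ ‖xk - xstar‖ ^ 2 - ‖xbar - xk‖ ^ 2 - 2 * γ * (F xbar - Fstar)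
      + γ ^ 2 / ((1 + μ * γ) * (1 - c * (1 - p))) * (1 / (n : ℝ) * S)
      + (1 + μ * γ) * (c * (1 - p)) * W := by
    have hnn : 1 / (n : ℝ) * n = 1 := one_div_mul_cancel hn'.ne'
    rw [hFb, hFs, hL]
    calc _ = _ := by ring
      _ ≤ _ := havg
      _ = (1 / (n : ℝ) * n) * (‖xk - xstar‖ ^ 2 - ‖xbar - xk‖ ^ 2
            + (1 + μ * γ) * (c * (1 - p)) * W)
          + 2 * γ * (1 / (n : ℝ) * ∑ i, f i xstar - 1 / (n : ℝ) * ∑ i, f i xbar)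
          + γ ^ 2 / ((1 + μ * γ) * (1 - c * (1 - p))) * (1 / (n : ℝ) * S) := by ring
      _ = _ := by rw [hnn]; ring
  have hκ : μ + 1 / γ = (1 + μ * γ) / γ := by field_simp; ring
  have hS : γ ^ 2 / ((1 + μ * γ) * (1 - c * (1 - p))) * (1 / (n : ℝ) * S)
      ≤ (1 + μ * γ) * (c * p * ξ) * W := by
    calc _ ≤ γ ^ 2 / ((1 + μ * γ) * (1 - c * (1 - p))) * (δ ^ 2 * W) := by gcongr
      _ = (1 + μ * γ) * (δ ^ 2 / ((μ + 1 / γ) ^ 2 * (1 - c * (1 - p)))) * W := by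
        rw [hκ]; field_simp
      _ ≤ _ := by gcongr
  have hY : W ≤ (1 + ζ) * ‖wk - xk‖ ^ 2 + (1 + ζ⁻¹) * ‖xbar - xk‖ ^ 2 := by
    have hy := two_mul_inner_le_young (xk - xbar) (wk - xk) (γ := 1) hζ
    have he : wk - xbar = (xk - xbar) + (wk - xk) := by abel
    rw [hW, he, norm_add_sq_real, norm_sub_rev xbar xk]
    rw [one_pow, one_div] at hy
    linarith
  have hWq : (1 + μ * γ) * c * (1 - p * (1 - ξ)) * W
      ≤ (1 + μ * γ) * (c * (1 - r) * ‖wk - xk‖ ^ 2) + ‖xbar - xk‖ ^ 2 := by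
    have h1 := mul_le_mul_of_nonneg_left hY
      (by positivity : 0 ≤ (1 + μ * γ) * c * (1 - p * (1 - ξ)))
    have h2 := mul_le_mul_of_nonneg_right hcq (sq_nonneg ‖xbar - xk‖)
    rw [hcond3]
    linarith
  have hfin : L ≤ 1 / (1 + μ * γ) * ‖xk - xstar‖ ^ 2 + (1 - r) * (c * ‖wk - xk‖ ^ 2)
      - (2 / (μ + 1 / γ)) * (F xbar - Fstar) := by
    have h2 : 1 / (1 + μ * γ) * ‖xk - xstar‖ ^ 2 + (1 - r) * (c * ‖wk - xk‖ ^ 2)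
        - (2 / (μ + 1 / γ)) * (F xbar - Fstar)
        = (‖xk - xstar‖ ^ 2 + (1 + μ * γ) * (c * (1 - r) * ‖wk - xk‖ ^ 2)
          - 2 * γ * (F xbar - Fstar)) / (1 + μ * γ) := by
      rw [hκ]; field_simp
    rw [h2, le_div_iff₀ hM]
    linarith
  have m1 : 1 / (1 + μ * γ) * ‖xk - xstar‖ ^ 2
      ≤ max (1 / (1 + μ * γ)) (1 - r) * ‖xk - xstar‖ ^ 2 := by
    gcongr; exact le_max_left _ _
  have m2 : (1 - r) * (c * ‖wk - xk‖ ^ 2)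
      ≤ max (1 / (1 + μ * γ)) (1 - r) * (c * ‖wk - xk‖ ^ 2) := by
    gcongr; exact le_max_right _ _
  linarith
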